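/- (Gauss–Bonnet for finite posets) Let (X, ≤) be a nonempty finite poset, let 𝕄 be the set of maximal chains of X (maximal linearly ordered subsets), and for a chain c let 𝕄_c = {m ∈ 𝕄 : c ⊆ m}. Then, as identities in ℚ: Σ_{n ≥ 0} (−1)ⁿ·|CₙX| = Σ_{m ∈ 𝕄} Σ_{∅ ≠ c ⊆ m} (−1)^{|c|+1}/|𝕄_c|, and Σ_{n ≥ −1} (−1)ⁿ·|CₙX| = Σ_{m ∈ 𝕄} Σ_{c ⊆ m} (−1)^{|c|+1}/|𝕄_c|, where in the second identity c ranges over all subsets of m including the empty set. -/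

import Mathlib

/-!
Both identities are double counting. Exchanging the order of summation on the right-hand side,
each chain `c` contributes `(-1)^(|c|+1) / |𝕄_c|` once for every maximal chain `m ∈ 𝕄_c`, hence
`(-1)^(|c|+1)` in total; the cancellation needs `|𝕄_c| ≠ 0`, i.e. that every chain extends to a
maximal one (`exists_maximalChain_above`). So the right-hand side is the signed count of chains
(`finsum_maximalChains`), and the left-hand side is the same count grouped by cardinality
(`finsum_chainsOfCard`).
-/

/-- The set of chains (linearly ordered subsets) of the poset `X` of cardinality `k`. -/
def chainsOfCard (X : Type*) [PartialOrder X] (k : ℕ) : Set (Finset X) :=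
  {s : Finset X | IsChain (· ≤ ·) (s : Set X) ∧ s.card = k}

/-- The set `𝕄` of maximal chains of the poset `X`. -/
def maximalChains (X : Type*) [PartialOrder X] : Set (Finset X) :=
  {m : Finset X | IsChain (· ≤ ·) (m : Set X) ∧
    ∀ m' : Finset X, IsChain (· ≤ ·) (m' : Set X) → m ⊆ m' → m = m'}

/-- `|𝕄_c|`: the number of maximal chains of `X` containing the chain `c`. -/
noncomputable def numMaximalChainsAbove (X : Type*) [PartialOrder X] (c : Finset X) : ℕ :=
  Nat.card {m : Finset X // m ∈ maximalChains X ∧ c ⊆ m}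

theorem exists_maximalChain_above {X : Type*} [PartialOrder X] [Fintype X] (c : Finset X)
    (hc : IsChain (· ≤ ·) (c : Set X)) : ∃ m ∈ maximalChains X, c ⊆ m := by
  obtain ⟨m, hcm, hm⟩ :=
    (Set.toFinite {s : Finset X | IsChain (· ≤ ·) (s : Set X)}).exists_le_maximal hc
  exact ⟨m, ⟨hm.prop, fun m' h' hmm' => hm.eq_of_le h' hmm'⟩, hcm⟩

open scoped Classical in
/-- The right-hand sides, for a general weight `w` and a general condition `P` on the chains:
averaging over the maximal chains above `c` and then summing over all maximal chains counts each
chain satisfying `P` exactly once. -/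
theorem finsum_maximalChains {X : Type*} [PartialOrder X] [Fintype X]
    (P : Finset X → Prop) [DecidablePred P] (w : Finset X → ℚ) :
    ∑ᶠ m ∈ maximalChains X, ∑ c ∈ m.powerset.filter P, w c / (numMaximalChainsAbove X c : ℚ) =
      ∑ c ∈ Finset.univ.filter fun c : Finset X => IsChain (· ≤ ·) (c : Set X) ∧ P c, w c := by
  rw [finsum_mem_eq_sum_of_inter_support_eq (t := Finset.univ.filter (· ∈ maximalChains X)) _ (by ext; simp)]
  rw [Finset.sum_comm' (t' := Finset.univ.filter fun c : Finset X => IsChain (· ≤ ·) (c : Set X) ∧ P c)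
    (s' := fun c => Finset.univ.filter fun m => m ∈ maximalChains X ∧ c ⊆ m)]
  · refine Finset.sum_congr rfl fun c hc => ?_
    simp only [Finset.mem_filter, Finset.mem_univ, true_and] at hc
    have hN : numMaximalChainsAbove X c =
        (Finset.univ.filter fun m => m ∈ maximalChains X ∧ c ⊆ m).card := by
      rw [numMaximalChainsAbove, Nat.card_eq_fintype_card, Fintype.card_subtype]
    obtain ⟨m, hm, hcm⟩ := exists_maximalChain_above c hc.1
    have h0 : (numMaximalChainsAbove X c : ℚ) ≠ 0 := by
      rw [hN, Nat.cast_ne_zero]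
      exact Finset.card_ne_zero_of_mem (a := m) (by simp [hm, hcm])
    rw [Finset.sum_const, nsmul_eq_mul, ← hN]
    field_simp
  · intro m c
    simp only [Finset.mem_filter, Finset.mem_univ, true_and, Finset.mem_powerset]
    constructor
    · rintro ⟨hm, hcm, hP⟩
      exact ⟨⟨hm, hcm⟩, hm.1.mono (by exact_mod_cast hcm), hP⟩
    · rintro ⟨⟨hm, hcm⟩, -, hP⟩
      exact ⟨hm, hcm, hP⟩

open scoped Classical in
/-- The left-hand sides: grouping the chains with at least `e` elements by cardinality. The shift
is `e = 1` for the Euler characteristic and `e = 0` for the reduced one. -/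
theorem finsum_chainsOfCard {X : Type*} [PartialOrder X] [Fintype X] (e : ℕ) (f : ℕ → ℚ) :
    ∑ᶠ n : ℕ, f n * (Nat.card (chainsOfCard X (n + e)) : ℚ) =
      ∑ c ∈ Finset.univ.filter fun c : Finset X => IsChain (· ≤ ·) (c : Set X) ∧ e ≤ c.card,
        f (c.card - e) := by
  have hN (k : ℕ) : Nat.card (chainsOfCard X k) =
      (Finset.univ.filter fun c : Finset X => IsChain (· ≤ ·) (c : Set X) ∧ c.card = k).card := by
    rw [← Fintype.card_subtype, ← Nat.card_eq_fintype_card]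
    rfl
  rw [finsum_eq_sum_of_support_subset (s := Finset.range (Fintype.card X + 1))]
  · rw [← Finset.sum_fiberwise_of_maps_to (t := Finset.range (Fintype.card X + 1))
      (g := fun c : Finset X => c.card - e)]
    · refine Finset.sum_congr rfl fun n _ => ?_
      rw [Finset.sum_congr rfl (g := fun _ => f n), Finset.sum_const, nsmul_eq_mul, mul_comm, hN]
      · congr 3
        ext c
        simp only [Finset.mem_filter, Finset.mem_univ, true_and, and_assoc]
        refine and_congr_right fun _ => ?_
        omega
      · intro c hc
        rw [(Finset.mem_filter.mp hc).2]
    · intro c _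
      have := c.card_le_univ
      simp only [Finset.mem_range]
      omega
  -- No chain has more elements than `X`, so only finitely many terms are nonzero.
  · intro n hn
    rw [Function.mem_support] at hn
    have h := right_ne_zero_of_mul hn
    rw [hN, Nat.cast_ne_zero, Finset.card_ne_zero] at h
    obtain ⟨c, hc⟩ := h
    have h1 := (Finset.mem_filter.mp hc).2.2
    have h2 := c.card_le_univ
    simp only [Finset.coe_range, Set.mem_Iio]
    omega

/-- **Gauss–Bonnet theorem for finite posets.**
For a nonempty finite poset `X`, both the Euler characteristic
`Σ_{n ≥ 0} (−1)ⁿ·|CₙX|` (sum over chains of cardinality `n + 1`) and the reduced Euler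
characteristic `Σ_{n ≥ −1} (−1)ⁿ·|CₙX|` (reindexed over cardinalities `k = n + 1`, a
chain of cardinality `k` contributing `(−1)^{k-1} = −(−1)^k`) are computed by integrating
the (reduced) Euler class over the maximal chains:
the first equals `Σ_{m ∈ 𝕄} Σ_{∅ ≠ c ⊆ m} (−1)^{|c|+1}/|𝕄_c|`, and the second equals
`Σ_{m ∈ 𝕄} Σ_{c ⊆ m} (−1)^{|c|+1}/|𝕄_c|`. -/
theorem gauss_bonnet_finite_poset
    {X : Type*} [PartialOrder X] [Fintype X] [Nonempty X] [DecidableEq X] :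
    (∑ᶠ n : ℕ, (-1 : ℚ) ^ n * (Nat.card (chainsOfCard X (n + 1)) : ℚ) =
      ∑ᶠ m ∈ maximalChains X, ∑ c ∈ m.powerset.filter (· ≠ ∅),
        (-1 : ℚ) ^ (c.card + 1) / (numMaximalChainsAbove X c : ℚ)) ∧
    (∑ᶠ k : ℕ, -((-1 : ℚ) ^ k) * (Nat.card (chainsOfCard X k) : ℚ) =
      ∑ᶠ m ∈ maximalChains X, ∑ c ∈ m.powerset,
        (-1 : ℚ) ^ (c.card + 1) / (numMaximalChainsAbove X c : ℚ)) := by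
  classical
  constructor
  · have hR := finsum_maximalChains (X := X) (· ≠ ∅) (fun c => (-1 : ℚ) ^ (c.card + 1))
    have hL := finsum_chainsOfCard (X := X) 1 (fun n => (-1 : ℚ) ^ n)
    rw [hL]
    refine Eq.trans ?_ hR.symm
    refine Finset.sum_congr ?_ fun c hc => ?_
    · ext c
      simp [Finset.one_le_card, Finset.nonempty_iff_ne_empty]
    · have hc' : 1 ≤ c.card :=
        Finset.one_le_card.mpr (Finset.nonempty_iff_ne_empty.mpr (Finset.mem_filter.mp hc).2.2)
      obtain ⟨k, hk⟩ := Nat.exists_eq_add_of_le hc'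
      rw [hk, Nat.add_sub_cancel_left]
      ring
  · have hR := finsum_maximalChains (X := X) (fun _ => True) (fun c => (-1 : ℚ) ^ (c.card + 1))
    have hL := finsum_chainsOfCard (X := X) 0 (fun k => -((-1 : ℚ) ^ k))
    simp only [Finset.filter_true, and_true] at hR
    simp only [add_zero, zero_le, and_true, Nat.sub_zero] at hL
    rw [hL, hR]
    exact Finset.sum_congr rfl fun c _ => by ring
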